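/- arXiv:2004.07441 — 3 statements merged into one kernel-verified Lean document; each statement's English description precedes it below -/
import Mathlib

section
/- Let K ≥ 2 be a natural number and let (X,d) be a K-doubling metric space. Let m and D be natural numbers with 1 ≤ m and m ≤ D − 224·K⁴·log K (natural logarithm). If v₁,…,v_m : X → S^{D−1} are 1-Lipschitz maps that form a pointwise orthonormal system, then there exists a 150·K⁵·m·(m+1)-Lipschitz map v_{m+1} : X → S^{D−1} such that v₁,…,v_m together with v_{m+1} form a pointwise orthonormal system. -/
/-!
The new vector field is glued from constant vectors along a net. Put `r = 1 / (2Km)` and let `N` be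
a maximal `r/2`-separated subset of `X`. By doubling, every ball of radius `r` contains at most
`K ^ 2` points of `N`, and every ball of radius `2r` at most `K ^ 3`
(`IsKDoubling.card_separated`).

Since `m + K ^ 3 < D`, a greedy choice along a well-order of `X` yields unit vectors `u p`, such
that `u p` is orthogonal to `v₁(p), …, v_m(p)` and `u p ⟂ u q` whenever `p ≠ q` lie in `N` at
distance less than `2r` (`exists_greedy`). With the bumps `ψ_p(x) = max 0 (r - d(x, p))` let
`U(x) = ∑ ψ_p(x) u_p`. At every point the active vectors are orthonormal, so
`|U|² = ∑ ψ_p²`; hence `|U| ≥ r/2` and, by Cauchy–Schwarz, `∑ ψ_p ≤ K |U|`. As the `v_k` are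
`1`-Lipschitz, `|⟨v_k, U⟩| ≤ r ∑ ψ_p ≤ r K |U|`, so removing from `U` its components along
`v₁, …, v_m` leaves a vector of norm at least `(1 - m r K) |U| = |U|/2 ≥ r/4`. Normalizing this
vector gives the required map; its Lipschitz constant is at most `48 K³ m (m+1)`.
-/


/-- A metric space is `K`-doubling if every open ball of radius `R` can be covered by
`K` open balls of radius `R/2`. -/
def IsKDoubling (X : Type*) [PseudoMetricSpace X] (K : ℕ) : Prop :=
  ∀ (x : X) (R : ℝ), 0 < R → ∃ y : Fin K → X,
    Metric.ball x R ⊆ ⋃ j, Metric.ball (y j) (R / 2)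

/-! ### Doubling and separated sets -/

lemma IsKDoubling.cover {X : Type*} [PseudoMetricSpace X] {K : ℕ} (hX : IsKDoubling X K)
    (n : ℕ) (x : X) (R : ℝ) (hR : 0 < R) :
    ∃ T : Finset X, T.card ≤ K ^ n ∧ ∀ z ∈ Metric.ball x R, ∃ y ∈ T, dist z y < R / 2 ^ n := by
  classical
  induction n with
  | zero => exact ⟨{x}, by simp, fun z hz => ⟨x, by simp, by simpa using hz⟩⟩
  | succ n ih =>
    obtain ⟨T, hT, hc⟩ := ih
    choose f hf using fun y : X => hX y (R / 2 ^ n) (by positivity)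
    refine ⟨T.biUnion fun y => Finset.univ.image (f y), ?_, fun z hz => ?_⟩
    · rw [pow_succ]
      refine (Finset.card_biUnion_le_card_mul _ _ K fun y _ => ?_).trans
        (Nat.mul_le_mul_right _ hT)
      simpa using Finset.card_image_le (s := Finset.univ) (f := f y)
    · obtain ⟨y, hy, hzy⟩ := hc z hz
      obtain ⟨j, hj⟩ := Set.mem_iUnion.1 (hf y (Metric.mem_ball.2 hzy))
      refine ⟨f y j, Finset.mem_biUnion.2 ⟨y, hy, by simp⟩, ?_⟩
      rw [Metric.mem_ball] at hj
      rwa [pow_succ, ← div_div]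

/-- Cover the ball by `K ^ n` balls of radius `R / 2 ^ n`; each of them has pairwise distances
less than `s`, so it contains at most one point of an `s`-separated set. -/
lemma IsKDoubling.card_separated {X : Type*} [PseudoMetricSpace X] {K : ℕ}
    (hX : IsKDoubling X K) {N : Set X} {s : ℝ} (hN : N.Pairwise fun p q => s ≤ dist p q)
    (n : ℕ) (x : X) (R : ℝ) (hR : 0 < R) (hs : R / 2 ^ n * 2 ≤ s) :
    ∃ A : Finset X, (∀ p, p ∈ A ↔ p ∈ N ∧ dist x p < R) ∧ A.card ≤ K ^ n := by
  classical
  obtain ⟨T, hT, hc⟩ := hX.cover n x R hR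
  choose! f hf using hc
  have hmaps : Set.MapsTo f (N ∩ Metric.ball x R) (T : Set X) := fun z hz => (hf z hz.2).1
  have hinj : Set.InjOn f (N ∩ Metric.ball x R) := by
    intro a ha b hb hab
    by_contra hne
    have h1 := hN ha.1 hb.1 hne
    have h2 := (hf a ha.2).2
    have h3 := (hf b hb.2).2
    rw [← hab] at h3
    have h4 := dist_triangle_right a b (f a)
    linarith
  have hfin : (N ∩ Metric.ball x R).Finite := Set.Finite.of_injOn hmaps hinj T.finite_toSet
  refine ⟨hfin.toFinset, fun p => by simp [dist_comm], le_trans ?_ hT⟩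
  exact Finset.card_le_card_of_injOn f (by simpa using hmaps) (by simpa using hinj)

lemma exists_net (X : Type*) [MetricSpace X] (s : ℝ) (hs : 0 < s) :
    ∃ N : Set X, (N.Pairwise fun p q => s ≤ dist p q) ∧ ∀ x, ∃ p ∈ N, dist x p < s := by
  obtain ⟨N, hN⟩ := zorn_subset {N : Set X | N.Pairwise fun p q => s ≤ dist p q} (by
    intro c hc hchain
    exact ⟨⋃₀ c, (Set.pairwise_sUnion hchain.directedOn).2 hc,
      fun t ht => Set.subset_sUnion_of_mem ht⟩)
  refine ⟨N, hN.prop, fun x => ?_⟩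
  by_contra! h
  have hx : x ∈ N := by
    refine hN.le_of_ge (y := insert x N) ?_ (Set.subset_insert x N) (Set.mem_insert x N)
    refine hN.prop.insert fun b hb _ => ⟨h b hb, ?_⟩
    rw [dist_comm]
    exact h b hb
  have := h x hx
  rw [dist_self] at this
  linarith

/-! ### Greedy choice of the vectors -/

lemma exists_unit_orthogonal {D : ℕ} (s : Finset (EuclideanSpace ℝ (Fin D))) (hs : s.card < D) :
    ∃ z : EuclideanSpace ℝ (Fin D), ‖z‖ = 1 ∧ ∀ a ∈ s, inner ℝ a z = 0 := by
  have hne : (Submodule.span ℝ (s : Set (EuclideanSpace ℝ (Fin D))))ᗮ ≠ ⊥ := by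
    intro h
    rw [Submodule.orthogonal_eq_bot_iff] at h
    have h1 := finrank_span_finset_le_card (R := ℝ) s
    rw [Set.finrank, h, finrank_top, finrank_euclideanSpace_fin] at h1
    omega
  obtain ⟨z, hz, hz0⟩ := Submodule.exists_mem_ne_zero_of_ne_bot hne
  refine ⟨(‖z‖⁻¹ : ℝ) • z, norm_smul_inv_norm hz0, fun a ha => ?_⟩
  rw [inner_smul_right, (Submodule.mem_orthogonal _ _).1 hz a (Submodule.subset_span ha), mul_zero]

/-- Well-founded recursion along a well-order of `X`: at each step only the `m` vectors `v k p` and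
the at most `M` vectors already chosen at nearby points of `N` have to be avoided. -/
lemma exists_greedy {X : Type*} [MetricSpace X] {m M D : ℕ} (hD : m + M < D)
    (v : Fin m → X → EuclideanSpace ℝ (Fin D)) (N : Set X) (ρ : ℝ)
    (hN : ∀ x, ∃ A : Finset X, (∀ p, p ∈ A ↔ p ∈ N ∧ dist x p < ρ) ∧ A.card ≤ M) :
    ∃ u : X → EuclideanSpace ℝ (Fin D), (∀ p, ‖u p‖ = 1) ∧ (∀ p k, inner ℝ (v k p) (u p) = 0) ∧
      ∀ p ∈ N, ∀ q ∈ N, p ≠ q → dist p q < ρ → inner ℝ (u p) (u q) = 0 := by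
  classical
  have step : ∀ (p : X) (f : X → EuclideanSpace ℝ (Fin D)), ∃ z : EuclideanSpace ℝ (Fin D),
      ‖z‖ = 1 ∧ (∀ k, inner ℝ (v k p) z = 0) ∧
        ∀ q ∈ N, dist p q < ρ → inner ℝ (f q) z = 0 := by
    intro p f
    obtain ⟨A, hA, hAc⟩ := hN p
    obtain ⟨z, hz, hz'⟩ := exists_unit_orthogonal
      (Finset.univ.image (fun k => v k p) ∪ A.image f) (by
        have h1 := Finset.card_union_le (Finset.univ.image (fun k => v k p)) (A.image f)
        have h2 := Finset.card_image_le (s := Finset.univ) (f := fun k => v k p)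
        have h3 := Finset.card_image_le (s := A) (f := f)
        rw [Finset.card_univ, Fintype.card_fin] at h2
        omega)
    refine ⟨z, hz, fun k => hz' _ ?_, fun q hq hpq => hz' _ ?_⟩
    · exact Finset.mem_union_left _ (Finset.mem_image_of_mem _ (Finset.mem_univ k))
    · exact Finset.mem_union_right _ (Finset.mem_image_of_mem _ ((hA q).2 ⟨hq, hpq⟩))
  choose g hg1 hg2 hg3 using step
  have wf : WellFounded (WellOrderingRel : X → X → Prop) := WellOrderingRel.isWellOrder.wf
  let F : ∀ p : X, (∀ q, WellOrderingRel q p → EuclideanSpace ℝ (Fin D)) →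
      EuclideanSpace ℝ (Fin D) :=
    fun p ih => g p fun q => if h : WellOrderingRel q p then ih q h else 0
  have hu : ∀ p, wf.fix F p = g p fun q => if WellOrderingRel q p then wf.fix F q else 0 := by
    intro p
    rw [wf.fix_eq]
    simp only [F, dite_eq_ite]
  have key : ∀ p ∈ N, ∀ q, WellOrderingRel p q → dist q p < ρ →
      inner ℝ (wf.fix F p) (wf.fix F q) = 0 := by
    intro p hp q hpq hd
    have h := hg3 q (fun q' => if WellOrderingRel q' q then wf.fix F q' else 0) p hp hd
    rw [← hu q] at h
    simpa only [hpq, if_true] using h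
  refine ⟨wf.fix F, fun p => ?_, fun p k => ?_, fun p hp q hq hne hd => ?_⟩
  · rw [hu]; exact hg1 _ _
  · rw [hu]; exact hg2 _ _ _
  · rcases trichotomous_of (WellOrderingRel : X → X → Prop) p q with h | h | h
    · exact key p hp q h (by rwa [dist_comm])
    · exact absurd h hne
    · rw [real_inner_comm]
      exact key q hq p h hd

/-! ### Norm estimates -/

lemma norm_normalize_sub_le {E : Type*} [NormedAddCommGroup E] [NormedSpace ℝ E] {a b : E} {c : ℝ}
    (hc : 0 < c) (ha : c ≤ ‖a‖) (hb : c ≤ ‖b‖) :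
    ‖(‖a‖⁻¹ : ℝ) • a - (‖b‖⁻¹ : ℝ) • b‖ ≤ 2 / c * ‖a - b‖ := by
  have ha0 : 0 < ‖a‖ := hc.trans_le ha
  have hb0 : 0 < ‖b‖ := hc.trans_le hb
  have h1 : (‖a‖⁻¹ : ℝ) • a - (‖b‖⁻¹ : ℝ) • b
      = (‖a‖⁻¹ : ℝ) • ((a - b) + ((‖b‖ - ‖a‖) * ‖b‖⁻¹) • b) := by
    have : ‖a‖⁻¹ * ((‖b‖ - ‖a‖) * ‖b‖⁻¹) = ‖a‖⁻¹ - ‖b‖⁻¹ := by field_simp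
    rw [smul_add, smul_smul, this, smul_sub, sub_smul]
    abel
  have h2 : ‖((‖b‖ - ‖a‖) * ‖b‖⁻¹) • b‖ ≤ ‖a - b‖ := by
    rw [norm_smul, norm_mul, norm_inv, norm_norm, mul_assoc, inv_mul_cancel₀ hb0.ne', mul_one,
      Real.norm_eq_abs, abs_sub_comm]
    exact abs_norm_sub_norm_le a b
  rw [h1, norm_smul, norm_inv, norm_norm, div_mul_eq_mul_div, mul_comm, ← div_eq_mul_inv]
  have h3 : ‖(a - b) + ((‖b‖ - ‖a‖) * ‖b‖⁻¹) • b‖ ≤ 2 * ‖a - b‖ := by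
    linarith [norm_add_le (a - b) (((‖b‖ - ‖a‖) * ‖b‖⁻¹) • b)]
  exact div_le_div₀ (by positivity) h3 hc ha

lemma norm_component_sub_le {E : Type*} [NormedAddCommGroup E] [InnerProductSpace ℝ E]
    {v v' U U' : E} (hv : ‖v‖ = 1) (hv' : ‖v'‖ = 1) :
    ‖(inner ℝ v U) • v - (inner ℝ v' U') • v'‖ ≤ ‖U - U'‖ + 2 * ‖v - v'‖ * ‖U'‖ := by
  have h : (inner ℝ v U) • v - (inner ℝ v' U') • v'
      = (inner ℝ v (U - U')) • v + (inner ℝ (v - v') U') • v + (inner ℝ v' U') • (v - v') := by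
    rw [inner_sub_right, inner_sub_left, sub_smul, sub_smul, smul_sub]
    abel
  rw [h]
  refine norm_add₃_le.trans ?_
  rw [norm_smul, norm_smul, norm_smul, hv]
  have h1 := norm_inner_le_norm (𝕜 := ℝ) v (U - U')
  have h2 := norm_inner_le_norm (𝕜 := ℝ) (v - v') U'
  have h3 := mul_le_mul_of_nonneg_right (norm_inner_le_norm (𝕜 := ℝ) v' U') (norm_nonneg (v - v'))
  rw [hv] at h1
  rw [hv'] at h3
  linarith

/-! ### The vector field -/

/-- The glued field `x ↦ ∑ ψ_p(x) u_p`, before projection and normalization. The last clause says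
that it is `2K²`-Lipschitz; `S x` is the sum of the bumps at `x`. -/
lemma exists_glued {X : Type*} [MetricSpace X] {K m D : ℕ}
    (hX : IsKDoubling X K) (hD : m + K ^ 3 < D) (v : Fin m → X → EuclideanSpace ℝ (Fin D))
    (hlip : ∀ i, LipschitzWith 1 (v i)) (r : ℝ) (hr : 0 < r) :
    ∃ (U : X → EuclideanSpace ℝ (Fin D)) (S : X → ℝ),
      (∀ x, r / 2 ≤ ‖U x‖) ∧ (∀ x, S x ≤ K * ‖U x‖) ∧ (∀ x, ‖U x‖ ≤ K ^ 2 * r) ∧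
      (∀ x k, |inner ℝ (v k x) (U x)| ≤ r * S x) ∧
      ∀ x y, ‖U x - U y‖ ≤ 2 * K ^ 2 * dist x y := by
  classical
  obtain ⟨N, hsep, hnet⟩ := exists_net X (r / 2) (by positivity)
  obtain ⟨u, hu1, huv, huu⟩ := exists_greedy hD v N (2 * r)
    fun x => hX.card_separated hsep 3 x (2 * r) (by positivity) (by linarith)
  choose A hA hAc using fun x => hX.card_separated hsep 2 x r hr (by linarith)
  have hAc' : ∀ x, ((A x).card : ℝ) ≤ (K : ℝ) ^ 2 := fun x => by exact_mod_cast hAc x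
  let ψ : X → X → ℝ := fun p x => max 0 (r - dist x p)
  have hψ0 : ∀ p x, 0 ≤ ψ p x := fun p x => le_max_left _ _
  have hψr : ∀ p x, ψ p x ≤ r := fun p x =>
    max_le hr.le (by linarith [dist_nonneg (x := x) (y := p)])
  have hψlip : ∀ p x y, |ψ p x - ψ p y| ≤ dist x y := by
    intro p x y
    refine (abs_max_sub_max_le_max _ _ _ _).trans (max_le (by simp) ?_)
    rw [sub_sub_sub_cancel_left, abs_sub_comm]
    exact abs_dist_sub_le x y p
  let U : X → EuclideanSpace ℝ (Fin D) := fun x => ∑ p ∈ A x, ψ p x • u p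
  let S : X → ℝ := fun x => ∑ p ∈ A x, ψ p x
  have hUsq : ∀ x, ‖U x‖ ^ 2 = ∑ p ∈ A x, ψ p x ^ 2 := by
    intro x
    rw [← real_inner_self_eq_norm_sq, sum_inner]
    refine Finset.sum_congr rfl fun p hp => ?_
    rw [inner_sum, Finset.sum_eq_single_of_mem p hp]
    · rw [real_inner_smul_left, real_inner_smul_right, real_inner_self_eq_norm_sq, hu1]
      ring
    · intro q hq hqp
      obtain ⟨hpN, hpd⟩ := (hA x p).1 hp
      obtain ⟨hqN, hqd⟩ := (hA x q).1 hq
      rw [real_inner_smul_left, real_inner_smul_right, huu p hpN q hqN hqp.symm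
        (by linarith [dist_triangle_left p q x])]
      ring
  refine ⟨U, S, fun x => ?_, fun x => ?_, fun x => ?_, fun x k => ?_, fun x y => ?_⟩
  · obtain ⟨p, hp, hd⟩ := hnet x
    have h1 : r / 2 ≤ ψ p x := le_max_of_le_right (by linarith)
    have h2 : ψ p x ^ 2 ≤ ∑ p ∈ A x, ψ p x ^ 2 :=
      Finset.single_le_sum (f := fun p => ψ p x ^ 2) (fun q _ => sq_nonneg _)
        ((hA x p).2 ⟨hp, by linarith⟩)
    rw [← hUsq] at h2
    exact h1.trans (le_of_sq_le_sq h2 (norm_nonneg _))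
  · have h1 : S x ^ 2 ≤ (A x).card * ∑ p ∈ A x, ψ p x ^ 2 := sq_sum_le_card_mul_sum_sq
    rw [← hUsq] at h1
    refine le_of_sq_le_sq ?_ (by positivity)
    rw [mul_pow]
    exact h1.trans (mul_le_mul_of_nonneg_right (hAc' x) (sq_nonneg _))
  · calc ‖U x‖ ≤ ∑ p ∈ A x, r := by
          refine norm_sum_le_of_le _ fun p _ => ?_
          rw [norm_smul, hu1, mul_one, Real.norm_of_nonneg (hψ0 p x)]
          exact hψr p x
      _ ≤ K ^ 2 * r := by
          rw [Finset.sum_const, nsmul_eq_mul]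
          exact mul_le_mul_of_nonneg_right (hAc' x) hr.le
  · simp only [U, S]
    rw [inner_sum, Finset.mul_sum]
    refine (Finset.abs_sum_le_sum_abs _ _).trans (Finset.sum_le_sum fun p hp => ?_)
    -- `u p` is orthogonal to `v k p`, which is within `r` of `v k x`
    have h1 : inner ℝ (v k x) (u p) = inner ℝ (v k x - v k p) (u p) := by
      rw [inner_sub_left, huv, sub_zero]
    have h2 := abs_real_inner_le_norm (v k x - v k p) (u p)
    rw [hu1, mul_one, ← dist_eq_norm] at h2
    have h3 := (hlip k).dist_le_mul x p
    rw [NNReal.coe_one, one_mul] at h3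
    rw [real_inner_smul_right, abs_mul, abs_of_nonneg (hψ0 p x), h1, mul_comm]
    exact mul_le_mul_of_nonneg_right (by linarith [((hA x p).1 hp).2]) (hψ0 p x)
  · have hext : ∀ z, A z ⊆ A x ∪ A y → U z = ∑ p ∈ A x ∪ A y, ψ p z • u p := by
      intro z hz
      -- points of `N` outside `A z` have a bump vanishing at `z`
      refine Finset.sum_subset hz fun p hp hpz => ?_
      have hpN : p ∈ N := by
        rcases Finset.mem_union.1 hp with h | h
        · exact ((hA x p).1 h).1
        · exact ((hA y p).1 h).1
      have h1 : ¬ dist z p < r := fun h => hpz ((hA z p).2 ⟨hpN, h⟩)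
      have h2 : ψ p z = 0 := max_eq_left (by linarith)
      rw [h2, zero_smul]
    rw [hext x Finset.subset_union_left, hext y Finset.subset_union_right,
      ← Finset.sum_sub_distrib]
    calc ‖∑ p ∈ A x ∪ A y, (ψ p x • u p - ψ p y • u p)‖ ≤ ∑ p ∈ A x ∪ A y, dist x y := by
          refine norm_sum_le_of_le _ fun p _ => ?_
          rw [← sub_smul, norm_smul, hu1, mul_one]
          exact hψlip p x y
      _ ≤ 2 * K ^ 2 * dist x y := by
          rw [Finset.sum_const, nsmul_eq_mul]
          refine mul_le_mul_of_nonneg_right ?_ dist_nonneg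
          have h1 : ((A x ∪ A y).card : ℝ) ≤ (A x).card + (A y).card := by
            exact_mod_cast Finset.card_union_le _ _
          linarith [hAc' x, hAc' y]

lemma orthonormal_snoc {E : Type*} [NormedAddCommGroup E] [InnerProductSpace ℝ E] {m : ℕ}
    {v : Fin m → E} (hv : Orthonormal ℝ v) {w : E} (hw : ‖w‖ = 1)
    (hvw : ∀ k, inner ℝ (v k) w = 0) :
    Orthonormal ℝ (Fin.snoc v w : Fin (m + 1) → E) := by
  refine ⟨fun i => ?_, fun i j hij => ?_⟩
  · refine Fin.lastCases ?_ (fun i => ?_) i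
    · rwa [Fin.snoc_last]
    · rw [Fin.snoc_castSucc]
      exact hv.1 i
  · induction i using Fin.lastCases with
    | last =>
      induction j using Fin.lastCases with
      | last => exact absurd rfl hij
      | cast j =>
        simp only [Fin.snoc_last, Fin.snoc_castSucc]
        rw [real_inner_comm]
        exact hvw j
    | cast i =>
      induction j using Fin.lastCases with
      | last =>
        simp only [Fin.snoc_last, Fin.snoc_castSucc]
        exact hvw i
      | cast j =>
        simp only [Fin.snoc_castSucc]
        exact hv.2 fun h => hij (congrArg Fin.castSucc h)

lemma add_pow_lt_of_log_bound {K m D : ℕ} (hK : 2 ≤ K)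
    (hmD : (m : ℝ) ≤ (D : ℝ) - 224 * (K : ℝ) ^ 4 * Real.log K) : m + K ^ 3 < D := by
  have hK' : (2 : ℝ) ≤ K := by exact_mod_cast hK
  have h1 : Real.log 2 ≤ Real.log K := Real.log_le_log (by norm_num) hK'
  have h2 := Real.log_two_gt_d9
  have h3 : (1 : ℝ) ≤ 224 * Real.log K := by linarith
  have h4 : (K : ℝ) ^ 4 * 1 ≤ K ^ 4 * (224 * Real.log K) :=
    mul_le_mul_of_nonneg_left h3 (by positivity)
  have h5 : (m : ℝ) + K ^ 4 ≤ D := by linarith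
  have h6 : m + K ^ 4 ≤ D := by exact_mod_cast h5
  have h7 : K ^ 3 < K ^ 4 := Nat.pow_lt_pow_right (by omega) (by omega)
  omega

/-- Theorem: Lipschitz extension of orthonormal systems on doubling
metric spaces. -/
theorem lipschitz_orthonormal_extension (K : ℕ) (hK : 2 ≤ K)
    (X : Type*) [MetricSpace X] (hX : IsKDoubling X K)
    (m D : ℕ) (hm : 1 ≤ m)
    (hmD : (m : ℝ) ≤ (D : ℝ) - 224 * (K : ℝ) ^ 4 * Real.log K)
    (v : Fin m → X → EuclideanSpace ℝ (Fin D))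
    (hlip : ∀ i, LipschitzWith 1 (v i))
    (horth : ∀ p : X, Orthonormal ℝ (fun i => v i p)) :
    ∃ w : X → EuclideanSpace ℝ (Fin D),
      (∀ x y : X, dist (w x) (w y) ≤ 150 * (K : ℝ) ^ 5 * m * (m + 1) * dist x y) ∧
      ∀ p : X, Orthonormal ℝ (Fin.snoc (fun i => v i p) (w p)) := by
  have hK' : (2 : ℝ) ≤ K := by exact_mod_cast hK
  have hm' : (1 : ℝ) ≤ m := by exact_mod_cast hm
  have hK0 : (0 : ℝ) < K := by linarith
  have hm0 : (0 : ℝ) < m := by linarith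
  obtain ⟨r, hr⟩ : ∃ r : ℝ, r = 1 / (2 * K * m) := ⟨_, rfl⟩
  have hr0 : 0 < r := by rw [hr]; positivity
  have hrKm : m * r * K = 1 / 2 := by rw [hr]; field_simp
  have hr4 : r ≤ 1 / 4 := by
    rw [hr]
    exact one_div_le_one_div_of_le (by norm_num) (by nlinarith)
  obtain ⟨U, S, hUlow, hS, hUup, hin, hUlip⟩ :=
    exists_glued hX (add_pow_lt_of_log_bound hK hmD) v hlip r hr0
  let W : X → EuclideanSpace ℝ (Fin D) := fun x => U x - ∑ k, (inner ℝ (v k x) (U x)) • v k x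
  have hv1 : ∀ k x, ‖v k x‖ = 1 := fun k x => (horth x).1 k
  have hWlow : ∀ x, r / 4 ≤ ‖W x‖ := by
    intro x
    have h1 : ‖∑ k, (inner ℝ (v k x) (U x)) • v k x‖ ≤ ∑ _k : Fin m, r * S x := by
      refine norm_sum_le_of_le _ fun k _ => ?_
      rw [norm_smul, hv1, mul_one]
      exact hin x k
    rw [Finset.sum_const, nsmul_eq_mul, Finset.card_univ, Fintype.card_fin] at h1
    have h2 : m * (r * S x) ≤ m * (r * (K * ‖U x‖)) := by
      gcongr
      exact hS x
    have h3 : m * (r * (K * ‖U x‖)) = ‖U x‖ / 2 := by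
      calc m * (r * (K * ‖U x‖)) = m * r * K * ‖U x‖ := by ring
        _ = ‖U x‖ / 2 := by rw [hrKm]; ring
    have h4 := norm_sub_norm_le (U x) (∑ k, (inner ℝ (v k x) (U x)) • v k x)
    have h5 := hUlow x
    change r / 4 ≤ ‖U x - ∑ k, (inner ℝ (v k x) (U x)) • v k x‖
    linarith
  have hWlip : ∀ x y, ‖W x - W y‖ ≤ 3 * K ^ 2 * (m + 1) * dist x y := by
    intro x y
    have hd : 0 ≤ dist x y := dist_nonneg
    have h0 : W x - W y = (U x - U y) -
        ∑ k, ((inner ℝ (v k x) (U x)) • v k x - (inner ℝ (v k y) (U y)) • v k y) := by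
      simp only [W]
      rw [Finset.sum_sub_distrib]
      abel
    have h1 : ‖∑ k, ((inner ℝ (v k x) (U x)) • v k x - (inner ℝ (v k y) (U y)) • v k y)‖ ≤
        ∑ _k : Fin m, 3 * K ^ 2 * dist x y := by
      refine norm_sum_le_of_le _ fun k _ => ?_
      refine (norm_component_sub_le (hv1 k x) (hv1 k y)).trans ?_
      have h2 := (hlip k).dist_le_mul x y
      rw [NNReal.coe_one, one_mul, dist_eq_norm] at h2
      have h3 : ‖U y‖ ≤ K ^ 2 * (1 / 4) :=
        (hUup y).trans (mul_le_mul_of_nonneg_left hr4 (by positivity))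
      have h4 := mul_le_mul h2 h3 (norm_nonneg _) hd
      have h5 : 0 ≤ (K : ℝ) ^ 2 * dist x y := by positivity
      linarith [hUlip x y]
    rw [Finset.sum_const, nsmul_eq_mul, Finset.card_univ, Fintype.card_fin] at h1
    have h5 : 0 ≤ (K : ℝ) ^ 2 * dist x y := by positivity
    rw [h0]
    linarith [norm_sub_le (U x - U y)
      (∑ k, ((inner ℝ (v k x) (U x)) • v k x - (inner ℝ (v k y) (U y)) • v k y)), hUlip x y]
  have hWorth : ∀ x k, inner ℝ (v k x) (W x) = 0 := by
    intro x k
    simp only [W]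
    rw [inner_sub_right, (horth x).inner_right_fintype, sub_self]
  refine ⟨fun x => (‖W x‖⁻¹ : ℝ) • W x, fun x y => ?_, fun p => ?_⟩
  · rw [dist_eq_norm]
    refine (norm_normalize_sub_le (by positivity) (hWlow x) (hWlow y)).trans ?_
    have h1 : 2 / (r / 4) = 16 * K * m := by
      rw [hr]
      field_simp
      norm_num
    rw [h1]
    calc 16 * K * m * ‖W x - W y‖ ≤ 16 * K * m * (3 * K ^ 2 * (m + 1) * dist x y) := by
          gcongr
          exact hWlip x y
      _ = 48 * K ^ 3 * m * (m + 1) * dist x y := by ring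
      _ ≤ 150 * K ^ 5 * m * (m + 1) * dist x y := by
          gcongr
          · norm_num
          · linarith
          · norm_num
  · have hW0 : W p ≠ 0 := norm_pos_iff.1 ((by positivity : 0 < r / 4).trans_le (hWlow p))
    refine orthonormal_snoc (horth p) (norm_smul_inv_norm hW0) fun k => ?_
    rw [inner_smul_right, hWorth, mul_zero]
end

section
/- Let K ≥ 1 be a natural number, let (X,d) be a K-doubling metric space, let δ > 0, and let N be a maximal δ-net of X. Then there exist functions φ_q : X → [0,1], one for each q ∈ N, such that: (i) φ_q(p) = 0 whenever d(p,q) ≥ 2δ; (ii) for every p ∈ X one has Σ_{q∈N} φ_q(p)² = 1 (the sum having at most K² nonzero terms); (iii) each φ_q is (2K²/δ)-Lipschitz. -/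
/-- A `δ`-net: any two distinct points are at distance at least `δ`. -/
def IsNet {X : Type*} [PseudoMetricSpace X] (δ : ℝ) (N : Set X) : Prop :=
  ∀ p ∈ N, ∀ q ∈ N, p ≠ q → δ ≤ dist p q

/-- A maximal `δ`-net: a `δ`-net that is maximal with respect to inclusion. -/
def IsMaximalNet {X : Type*} [PseudoMetricSpace X] (δ : ℝ) (N : Set X) : Prop :=
  IsNet δ N ∧ ∀ N' : Set X, N ⊆ N' → IsNet δ N' → N' = N

/-- The tent function of height `1` centred at `q`: it is `1` at distance at most `δ` from `q`,
`0` at distance at least `2δ`, and affine in the distance in between. -/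
noncomputable def tent {X : Type*} [PseudoMetricSpace X] (δ : ℝ) (q p : X) : ℝ :=
  min 1 (max 0 (2 - dist p q / δ))

section Tent

variable {X : Type*} [PseudoMetricSpace X] {δ : ℝ}

lemma tent_nonneg (q p : X) : 0 ≤ tent δ q p :=
  le_min zero_le_one (le_max_left _ _)

lemma tent_eq_zero (hδ : 0 < δ) {q p : X} (h : 2 * δ ≤ dist p q) : tent δ q p = 0 := by
  have h1 : 2 - dist p q / δ ≤ 0 := by
    rw [sub_nonpos, le_div_iff₀ hδ]
    exact h
  simp [tent, max_eq_left h1]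

lemma tent_eq_one (hδ : 0 < δ) {q p : X} (h : dist p q ≤ δ) : tent δ q p = 1 := by
  have h1 : dist p q / δ ≤ 1 := (div_le_one hδ).2 h
  exact min_eq_left (le_max_of_le_right (by linarith))

lemma abs_tent_sub_le (hδ : 0 < δ) (q x y : X) :
    |tent δ q x - tent δ q y| ≤ dist x y / δ := by
  have h1 : |tent δ q x - tent δ q y| ≤
      |(2 - dist x q / δ) - (2 - dist y q / δ)| := by
    unfold tent
    refine (abs_min_sub_min_le_max _ _ _ _).trans ?_
    rw [sub_self, abs_zero, max_eq_right (abs_nonneg _)]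
    refine (abs_max_sub_max_le_max _ _ _ _).trans ?_
    rw [sub_self, abs_zero, max_eq_right (abs_nonneg _)]
  refine h1.trans ?_
  have h2 : (2 - dist x q / δ) - (2 - dist y q / δ) = -((dist x q - dist y q) / δ) := by ring
  rw [h2, abs_neg, abs_div, abs_of_pos hδ]
  gcongr
  exact abs_dist_sub_le x y q

end Tent

/-- Two applications of the doubling property cover a ball of radius `2δ` by `K²` balls of radius
`δ/2`, and each of these contains at most one point of a `δ`-net. -/
lemma encard_near_le {X : Type*} [PseudoMetricSpace X] {K : ℕ} (hX : IsKDoubling X K)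
    {δ : ℝ} (hδ : 0 < δ) {N : Set X} (hN : IsNet δ N) (p : X) :
    {q : N | dist p (q : X) < 2 * δ}.encard ≤ (K ^ 2 : ℕ) := by
  obtain ⟨y, hy⟩ := hX p (2 * δ) (by positivity)
  choose z hz using fun i => hX (y i) (2 * δ / 2) (by positivity)
  have key : ∀ q : {q : N | dist p (q : X) < 2 * δ}, ∃ ij : Fin K × Fin K,
      dist (q : X) (z ij.1 ij.2) < 2 * δ / 2 / 2 := by
    rintro ⟨q, hq⟩
    have h1 : (q : X) ∈ Metric.ball p (2 * δ) := by
      rw [Metric.mem_ball, dist_comm]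
      exact hq
    obtain ⟨i, hi⟩ := Set.mem_iUnion.1 (hy h1)
    obtain ⟨j, hj⟩ := Set.mem_iUnion.1 (hz i hi)
    exact ⟨(i, j), hj⟩
  choose g hg using key
  have hinj : Function.Injective g := by
    intro a b hab
    by_contra hne
    have h1 := hg a
    have h2 := hg b
    rw [← hab] at h2
    have h3 := hN a a.1.2 b b.1.2 fun h => hne (Subtype.ext (Subtype.ext h))
    have h4 := dist_triangle_right (a : X) (b : X) (z (g a).1 (g a).2)
    linarith
  have h := ENat.card_le_card_of_injective hinj
  rw [ENat.card_eq_coe_fintype_card (α := Fin K × Fin K)] at h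
  have hcard : Fintype.card (Fin K × Fin K) = K ^ 2 := by simp [sq]
  rwa [hcard] at h

/-- Every point is at distance less than `δ` from a maximal `δ`-net. -/
lemma IsMaximalNet.exists_dist_lt {X : Type*} [PseudoMetricSpace X] {δ : ℝ} (hδ : 0 < δ)
    {N : Set X} (hN : IsMaximalNet δ N) (p : X) : ∃ q : N, dist p (q : X) < δ := by
  by_contra! h
  have h1 : IsNet δ (insert p N) := by
    rintro a (rfl | ha) b (rfl | hb) hab
    · exact absurd rfl hab
    · exact h ⟨b, hb⟩
    · rw [dist_comm]
      exact h ⟨a, ha⟩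
    · exact hN.1 a ha b hb hab
  have h2 : p ∈ N := hN.2 _ (Set.subset_insert p N) h1 ▸ Set.mem_insert p N
  have h3 := h ⟨p, h2⟩
  rw [dist_self] at h3
  linarith

/-- Radial projection onto the unit sphere is `1`-Lipschitz outside the open unit ball. -/
lemma norm_normalize_sub_le_s1 {E : Type*} [NormedAddCommGroup E] [InnerProductSpace ℝ E]
    {u v : E} (hu : 1 ≤ ‖u‖) (hv : 1 ≤ ‖v‖) :
    ‖‖u‖⁻¹ • u - ‖v‖⁻¹ • v‖ ≤ ‖u - v‖ := by
  have hu0 : 0 < ‖u‖ := by linarith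
  have hv0 : 0 < ‖v‖ := by linarith
  refine le_of_sq_le_sq ?_ (norm_nonneg _)
  have hc := real_inner_le_norm u v
  have hn : ‖‖u‖⁻¹ • u‖ = 1 ∧ ‖‖v‖⁻¹ • v‖ = 1 := by
    constructor <;> rw [norm_smul, norm_inv, norm_norm, inv_mul_cancel₀ (by positivity)]
  rw [norm_sub_sq_real, norm_sub_sq_real, hn.1, hn.2, real_inner_smul_left,
    real_inner_smul_right]
  have h1 : ‖u‖⁻¹ * ‖v‖⁻¹ ≤ 1 :=
    mul_le_one₀ (inv_le_one_of_one_le₀ hu) (by positivity) (inv_le_one_of_one_le₀ hv)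
  have h2 : (‖u‖⁻¹ * ‖v‖⁻¹) * (‖u‖ * ‖v‖) = 1 := by field_simp
  -- With `a = ‖u‖`, `b = ‖v‖`, `c = ⟪u, v⟫`, the difference of the squared norms is
  -- `(a - b)² + 2 (ab - c) (1 - 1 / (ab))`.
  nlinarith [mul_nonneg (sub_nonneg.2 hc) (sub_nonneg.2 h1), sq_nonneg (‖u‖ - ‖v‖)]

/-- quadratic partition of unity adapted to a maximal net. -/
theorem quadratic_partition_of_unity (K : ℕ) (hK : 1 ≤ K)
    (X : Type*) [MetricSpace X] (hX : IsKDoubling X K)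
    (δ : ℝ) (hδ : 0 < δ) (N : Set X) (hN : IsMaximalNet δ N) :
    ∃ φ : N → X → ℝ,
      (∀ (q : N) (p : X), φ q p ∈ Set.Icc (0 : ℝ) 1) ∧
      (∀ (q : N) (p : X), 2 * δ ≤ dist p (q : X) → φ q p = 0) ∧
      (∀ p : X, {q : N | φ q p ≠ 0}.encard ≤ (K ^ 2 : ℕ) ∧
        ∑' q : N, (φ q p) ^ 2 = 1) ∧
      (∀ (q : N) (x y : X), |φ q x - φ q y| ≤ 2 * (K : ℝ) ^ 2 / δ * dist x y) := by
  classical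
  have hfin : ∀ p : X, {q : N | dist p (q : X) < 2 * δ}.Finite := fun p =>
    Set.finite_of_encard_le_coe (encard_near_le hX hδ hN.1 p)
  let T : X → Finset N := fun p => (hfin p).toFinset
  have hT : ∀ p, ∀ q : N, q ∉ T p → tent δ (q : X) p = 0 := by
    intro p q hq
    refine tent_eq_zero hδ ?_
    by_contra! h
    exact hq ((hfin p).mem_toFinset.2 h)
  have hTcard : ∀ p, (T p).card ≤ K ^ 2 := by
    intro p
    have h := encard_near_le hX hδ hN.1 p
    rw [(hfin p).encard_eq_coe_toFinset_card] at h
    exact_mod_cast h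
  let S : X → ℝ := fun p => ∑' q : N, tent δ (q : X) p ^ 2
  have hS : ∀ p, ∀ U : Finset N, T p ⊆ U → S p = ∑ q ∈ U, tent δ (q : X) p ^ 2 := by
    intro p U hU
    refine tsum_eq_sum fun q hq => ?_
    rw [hT p q fun h => hq (hU h)]
    norm_num
  have hle : ∀ p, ∀ q : N, tent δ (q : X) p ^ 2 ≤ S p := by
    intro p q
    rw [hS p (insert q (T p)) (Finset.subset_insert _ _)]
    exact Finset.single_le_sum (f := fun q : N => tent δ (q : X) p ^ 2)
      (fun _ _ => sq_nonneg _) (Finset.mem_insert_self _ _)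
  have hS1 : ∀ p, 1 ≤ S p := by
    intro p
    obtain ⟨q, hq⟩ := hN.exists_dist_lt hδ p
    simpa [tent_eq_one hδ hq.le] using hle p q
  have hsqrt : ∀ p, 1 ≤ √(S p) := fun p => Real.one_le_sqrt.2 (hS1 p)
  refine ⟨fun q p => (√(S p))⁻¹ * tent δ (q : X) p, ?_, ?_, ?_, ?_⟩
  · intro q p
    have h0 := hsqrt p
    refine ⟨mul_nonneg (by positivity) (tent_nonneg _ _), ?_⟩
    rw [inv_mul_le_one₀ (by linarith)]
    exact Real.le_sqrt_of_sq_le (hle p q)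
  · intro q p h
    simp only [tent_eq_zero hδ h, mul_zero]
  · intro p
    constructor
    · refine le_trans (Set.encard_le_encard fun q hq => ?_) (encard_near_le hX hδ hN.1 p)
      by_contra h
      exact hq (by simp only [tent_eq_zero hδ (not_lt.1 h), mul_zero])
    · have h0 := hS1 p
      simp only [mul_pow, inv_pow]
      rw [tsum_mul_left, Real.sq_sqrt (by linarith)]
      exact inv_mul_cancel₀ (by linarith)
  · intro q x y
    -- All tents nonzero at `x` or `y`, and the one at `q`, are coordinates indexed by `U`;
    -- only those in `T x ∪ T y` contribute to `‖F x - F y‖`.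
    let U : Finset N := insert q (T x ∪ T y)
    let F : X → EuclideanSpace ℝ U := fun p => WithLp.toLp 2 fun i => tent δ ((i : N) : X) p
    have hF : ∀ p, T p ⊆ U → ‖F p‖ = √(S p) := by
      intro p hp
      rw [EuclideanSpace.norm_eq, hS p U hp, ← Finset.sum_coe_sort U]
      simp [F]
    have hx := hF x fun i hi => Finset.mem_insert_of_mem (Finset.mem_union_left _ hi)
    have hy := hF y fun i hi => Finset.mem_insert_of_mem (Finset.mem_union_right _ hi)
    have h1 := norm_normalize_sub_le_s1 (u := F x) (v := F y) (hx ▸ hsqrt x) (hy ▸ hsqrt y)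
    rw [hx, hy] at h1
    have h2 := PiLp.norm_apply_le ((√(S x))⁻¹ • F x - (√(S y))⁻¹ • F y)
      ⟨q, Finset.mem_insert_self _ _⟩
    refine le_trans h2 (h1.trans ?_)
    have hK1 : (1 : ℝ) ≤ K := by exact_mod_cast hK
    refine le_of_sq_le_sq ?_ (by positivity)
    have h3 : ‖F x - F y‖ ^ 2 =
        ∑ i ∈ T x ∪ T y, (tent δ (i : X) x - tent δ (i : X) y) ^ 2 := by
      have h4 : ‖F x - F y‖ ^ 2 = ∑ i ∈ U, (tent δ (i : X) x - tent δ (i : X) y) ^ 2 := by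
        rw [EuclideanSpace.norm_sq_eq, ← Finset.sum_coe_sort U]
        simp [F]
      rw [h4]
      refine (Finset.sum_subset (Finset.subset_insert _ _) fun i _ hi => ?_).symm
      rw [Finset.notMem_union] at hi
      rw [hT x i hi.1, hT y i hi.2]
      norm_num
    have h5 : ∑ i ∈ T x ∪ T y, (tent δ (i : X) x - tent δ (i : X) y) ^ 2 ≤
        ((T x ∪ T y).card : ℝ) * (dist x y / δ) ^ 2 := by
      rw [← nsmul_eq_mul]
      exact Finset.sum_le_card_nsmul _ _ _ fun i _ =>
        have h := abs_le.1 (abs_tent_sub_le hδ (i : X) x y)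
        sq_le_sq' h.1 h.2
    have h6 : ((T x ∪ T y).card : ℝ) ≤ 2 * (K : ℝ) ^ 2 := by
      have h7 := Finset.card_union_le (T x) (T y)
      have h8 := hTcard x
      have h9 := hTcard y
      exact_mod_cast (by omega : (T x ∪ T y).card ≤ 2 * K ^ 2)
    have h10 : 2 * (K : ℝ) ^ 2 ≤ (2 * (K : ℝ) ^ 2) ^ 2 :=
      le_self_pow₀ (by nlinarith) two_ne_zero
    calc ‖F x - F y‖ ^ 2 ≤ ((T x ∪ T y).card : ℝ) * (dist x y / δ) ^ 2 := h3 ▸ h5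
      _ ≤ (2 * (K : ℝ) ^ 2) ^ 2 * (dist x y / δ) ^ 2 := by
        gcongr
        exact h6.trans h10
      _ = (2 * (K : ℝ) ^ 2 / δ * dist x y) ^ 2 := by ring
end

section
/- Let (X,d) be a metric space, let x₀ ∈ X, let A > 1, let 0 < ε < 1/2, and let H be a real Hilbert space. For each integer m ∈ ℤ let φ_m : X → H be a 1-Lipschitz map with ‖φ_m(x)‖ ≤ A^m for all x ∈ X and φ_m(x₀) = 0. Then for every x ∈ X the series Σ_{m∈ℤ} A^{−mε}·φ_m(x) converges absolutely, and there exists a constant C(A) > 0 depending only on A such that the map Φ(x) := Σ_{m∈ℤ} A^{−mε}·φ_m(x) satisfies ‖Φ(x) − Φ(y)‖ ≤ (C(A)/ε)·d(x,y)^{1−ε} for all x,y ∈ X. -/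
/-!
Put `D = d(x, y)`. The `m`-th term of `Φ(x) - Φ(y)` has norm at most `A^{-mε} min(D, 2 A^m)`.
Choosing `n` with `A^n ≤ D < A^{n+1}`, the terms with `m ≥ n` are dominated by the first entry of
the minimum and form a geometric series of ratio `A^{-ε}`, whose sum is of order `D^{1-ε} / ε`
(`one_div_one_sub_rpow_neg_le`). The terms with `m < n` are dominated by the second entry and form
a geometric series of ratio `A^{-(1-ε)} ≤ A^{-1/2}`, whose sum is of order `D^{1-ε}` uniformly in
`ε`. This is `summable_and_tsum_le`. Absolute convergence at `x` follows from the same lemma,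
because `φ_m` is 1-Lipschitz and vanishes at `x₀`.
-/

/-- The geometric series of ratio `A^{-ε}` has sum of order `1/ε`. -/
lemma one_div_one_sub_rpow_neg_le {A ε : ℝ} (hA : 1 < A) (hε : 0 < ε) (hε1 : ε ≤ 1) :
    (1 - A ^ (-ε))⁻¹ ≤ A / (Real.log A * ε) := by
  have hA0 : 0 < A := by linarith
  have hL : 0 < Real.log A := Real.log_pos hA
  have hr : 0 < A ^ (-ε) := Real.rpow_pos_of_pos hA0 _
  have h1 : A ^ (-ε) * A ^ ε = 1 := by
    rw [← Real.rpow_add hA0]; simp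
  have h2 : Real.log A * ε + 1 ≤ A ^ ε := by
    rw [Real.rpow_def_of_pos hA0]; exact Real.add_one_le_exp _
  have h3 : A⁻¹ ≤ A ^ (-ε) := by
    rw [← Real.rpow_neg_one]
    exact Real.rpow_le_rpow_of_exponent_le hA.le (by linarith)
  have hLe : 0 < Real.log A * ε := by positivity
  have h4 : A⁻¹ * (Real.log A * ε) ≤ 1 - A ^ (-ε) := by
    calc A⁻¹ * (Real.log A * ε) ≤ A ^ (-ε) * (Real.log A * ε) := by gcongr
      _ ≤ A ^ (-ε) * (A ^ ε - 1) := by gcongr; linarith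
      _ = 1 - A ^ (-ε) := by rw [mul_sub, h1, mul_one]
  calc (1 - A ^ (-ε))⁻¹ ≤ (A⁻¹ * (Real.log A * ε))⁻¹ := by
        gcongr
    _ = A / (Real.log A * ε) := by
        rw [mul_inv, inv_inv, div_eq_mul_inv]

/-- The constant `C(A)` of the Hölder estimate. -/
noncomputable def holderConst (A : ℝ) : ℝ :=
  A ^ 2 / Real.log A + 2 * (1 - A ^ (-(1 / 2) : ℝ))⁻¹

lemma rpow_neg_half_lt_one {A : ℝ} (hA : 1 < A) : A ^ (-(1 / 2) : ℝ) < 1 :=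
  Real.rpow_lt_one_of_one_lt_of_neg hA (by norm_num)

lemma holderConst_pos {A : ℝ} (hA : 1 < A) : 0 < holderConst A := by
  have hL : 0 < Real.log A := Real.log_pos hA
  have h : 0 < 1 - A ^ (-(1 / 2) : ℝ) := sub_pos.2 (rpow_neg_half_lt_one hA)
  have hA0 : 0 < A := by linarith
  unfold holderConst
  positivity

/-- Splitting the two-sided series at the scale `A^n ≈ D` dominates it by two geometric series. -/
lemma summable_and_tsum_le {A ε D : ℝ} (hA : 1 < A) (hε : 0 < ε) (hε2 : ε < 1 / 2) (hD : 0 < D)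
    (f : ℤ → ℝ) (f0 : ∀ m, 0 ≤ f m) (f1 : ∀ m : ℤ, f m ≤ A ^ (-(m : ℝ) * ε) * D)
    (f2 : ∀ m : ℤ, f m ≤ A ^ (-(m : ℝ) * ε) * (2 * A ^ m)) :
    Summable f ∧ ∑' m, f m ≤ holderConst A / ε * D ^ (1 - ε) := by
  have hA0 : 0 < A := by linarith
  obtain ⟨n, hn1, hn2⟩ := exists_mem_Ico_zpow hD hA
  rw [← Real.rpow_intCast] at hn1 hn2
  push_cast at hn2
  set r : ℝ := A ^ (-ε) with hr
  set s : ℝ := A ^ (-(1 / 2) : ℝ) with hs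
  have r0 : 0 < r := Real.rpow_pos_of_pos hA0 _
  have s0 : 0 < s := Real.rpow_pos_of_pos hA0 _
  have r1 : r < 1 := Real.rpow_lt_one_of_one_lt_of_neg hA (by linarith)
  have s1 : s < 1 := rpow_neg_half_lt_one hA
  set E : ℝ := D ^ (1 - ε) with hE
  have E0 : 0 < E := Real.rpow_pos_of_pos hD _
  have hpos : ∀ k : ℕ, f (n + (k : ℤ)) ≤ A * E * r ^ k := by
    intro k
    -- `D ≤ A^{n+1}` and `ε ≤ 1` give `A^{-nε} ≤ A D^{-ε}`.
    have h : A ^ (-(n : ℝ) * ε) * D ≤ A * E := by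
      have h5 : D ^ ε ≤ A ^ (((n : ℝ) + 1) * ε) := by
        rw [Real.rpow_mul hA0.le]
        exact Real.rpow_le_rpow hD.le hn2.le hε.le
      have h6 : D = D ^ ε * E := by
        rw [hE, ← Real.rpow_add hD]; simp
      calc A ^ (-(n : ℝ) * ε) * D = A ^ (-(n : ℝ) * ε) * (D ^ ε * E) := by rw [← h6]
        _ ≤ A ^ (-(n : ℝ) * ε) * (A ^ (((n : ℝ) + 1) * ε) * E) := by gcongr
        _ = A ^ ε * E := by
          rw [← mul_assoc, ← Real.rpow_add hA0]; congr 2; ring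
        _ ≤ A ^ (1 : ℝ) * E := by
          gcongr
          · exact hA.le
          · linarith
        _ = A * E := by rw [Real.rpow_one]
    calc f (n + (k : ℤ)) ≤ _ := f1 _
      _ = A ^ (-(n : ℝ) * ε) * D * r ^ k := by
        rw [hr, ← Real.rpow_natCast, ← Real.rpow_mul hA0.le, mul_right_comm,
          ← Real.rpow_add hA0]
        push_cast; congr 2; ring
      _ ≤ A * E * r ^ k := by gcongr
  have hneg : ∀ k : ℕ, f (n + -((k : ℤ) + 1)) ≤ 2 * E * s ^ k := by
    intro k
    have h : A ^ ((n : ℝ) * (1 - ε)) ≤ E := by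
      rw [Real.rpow_mul hA0.le]
      exact Real.rpow_le_rpow (Real.rpow_nonneg hA0.le _) hn1 (by linarith)
    calc f (n + -((k : ℤ) + 1)) ≤ _ := f2 _
      _ = 2 * A ^ ((n : ℝ) * (1 - ε)) * A ^ (-((k : ℝ) + 1) * (1 - ε)) := by
        rw [← Real.rpow_intCast, mul_left_comm, mul_assoc, ← Real.rpow_add hA0,
          ← Real.rpow_add hA0]
        push_cast; congr 2; ring
      _ ≤ 2 * E * A ^ (-(1 / 2) * (k : ℝ)) := by
        have hk : (0 : ℝ) ≤ k := k.cast_nonneg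
        have hexp : -((k : ℝ) + 1) * (1 - ε) ≤ -(1 / 2) * (k : ℝ) := by nlinarith
        have h7 := Real.rpow_le_rpow_of_exponent_le hA.le hexp
        gcongr
      _ = 2 * E * s ^ k := by
        rw [hs, Real.rpow_mul hA0.le, Real.rpow_natCast]
  have gr := (hasSum_geometric_of_lt_one r0.le r1).mul_left (A * E)
  have gs := (hasSum_geometric_of_lt_one s0.le s1).mul_left (2 * E)
  have S1 : Summable fun k : ℕ => f (n + (k : ℤ)) :=
    Summable.of_nonneg_of_le (fun _ => f0 _) hpos gr.summable
  have S2 : Summable fun k : ℕ => f (n + -((k : ℤ) + 1)) :=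
    Summable.of_nonneg_of_le (fun _ => f0 _) hneg gs.summable
  have key := HasSum.of_nat_of_neg_add_one (f := fun m : ℤ => f (n + m)) S1.hasSum S2.hasSum
  have key' : HasSum f _ := (Equiv.addLeft n).hasSum_iff.1 key
  refine ⟨key'.summable, ?_⟩
  rw [key'.tsum_eq]
  have b1 := hasSum_le hpos S1.hasSum gr
  have b2 := hasSum_le hneg S2.hasSum gs
  have b3 := one_div_one_sub_rpow_neg_le hA hε (by linarith)
  have hL : 0 < Real.log A := Real.log_pos hA
  have hs' : 0 < (1 - s)⁻¹ := inv_pos.2 (sub_pos.2 s1)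
  calc _ ≤ A * E * (1 - r)⁻¹ + 2 * E * (1 - s)⁻¹ := add_le_add b1 b2
    _ ≤ A * E * (A / (Real.log A * ε)) + 2 * E * ((1 - s)⁻¹ / ε) := by
      gcongr
      exact le_div_self hs'.le hε (by linarith)
    _ = holderConst A / ε * E := by
      rw [holderConst, ← hs]; field_simp


/-- Assouad–Weierstrass sum: Hölder upper bound with constant
`C(A)/ε`. -/
theorem weierstrass_sum_holder (A : ℝ) (hA : 1 < A) :
    ∃ C : ℝ, 0 < C ∧
      ∀ (X : Type*) [instX : MetricSpace X] (x₀ : X) (ε : ℝ), 0 < ε → ε < 1 / 2 →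
      ∀ (H : Type*) [instH : NormedAddCommGroup H] [instI : InnerProductSpace ℝ H]
        [instC : CompleteSpace H],
      ∀ φ : ℤ → X → H,
        (∀ m : ℤ, LipschitzWith 1 (φ m)) →
        (∀ (m : ℤ) (x : X), ‖φ m x‖ ≤ A ^ m) →
        (∀ m : ℤ, φ m x₀ = 0) →
        (∀ x : X, Summable fun m : ℤ => ‖A ^ (-(m : ℝ) * ε) • φ m x‖) ∧
        ∀ x y : X,
          ‖(∑' m : ℤ, A ^ (-(m : ℝ) * ε) • φ m x) -
              ∑' m : ℤ, A ^ (-(m : ℝ) * ε) • φ m y‖ ≤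
            C / ε * dist x y ^ (1 - ε) := by
  refine ⟨holderConst A, holderConst_pos hA, ?_⟩
  intro X _ x₀ ε hε hε2 H _ _ _ φ hlip hbd h0
  have hA0 : 0 < A := by linarith
  have hw : ∀ m : ℤ, 0 < A ^ (-(m : ℝ) * ε) := fun m => Real.rpow_pos_of_pos hA0 _
  have hnorm : ∀ (m : ℤ) (v : H), ‖A ^ (-(m : ℝ) * ε) • v‖ = A ^ (-(m : ℝ) * ε) * ‖v‖ := by
    intro m v
    rw [norm_smul, Real.norm_of_nonneg (hw m).le]
  have hd : ∀ (m : ℤ) (x y : X), ‖φ m x - φ m y‖ ≤ dist x y := by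
    intro m x y
    simpa [dist_eq_norm] using (hlip m).dist_le_mul x y
  have hsum : ∀ x : X, Summable fun m : ℤ => ‖A ^ (-(m : ℝ) * ε) • φ m x‖ := by
    intro x
    -- Adding `1` keeps the scale positive, also at `x = x₀`.
    refine (summable_and_tsum_le (D := dist x x₀ + 1) hA hε hε2 (by positivity) _
      (fun m => norm_nonneg _) (fun m => ?_) (fun m => ?_)).1
    · rw [hnorm]
      have h := hd m x x₀
      rw [h0, sub_zero] at h
      exact mul_le_mul_of_nonneg_left (by linarith) (hw m).le
    · rw [hnorm]
      have h := hbd m x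
      have h' : 0 < A ^ m := zpow_pos hA0 m
      exact mul_le_mul_of_nonneg_left (by linarith) (hw m).le
  refine ⟨hsum, fun x y => ?_⟩
  rcases eq_or_ne x y with rfl | hxy
  · have hC := holderConst_pos hA
    rw [sub_self, norm_zero]
    positivity
  obtain ⟨S, hS⟩ := summable_and_tsum_le hA hε hε2 (dist_pos.2 hxy)
    (fun m : ℤ => ‖A ^ (-(m : ℝ) * ε) • φ m x - A ^ (-(m : ℝ) * ε) • φ m y‖)
    (fun m => norm_nonneg _)
    (fun m => by
      rw [← smul_sub, hnorm]
      exact mul_le_mul_of_nonneg_left (hd m x y) (hw m).le)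
    (fun m => by
      rw [← smul_sub, hnorm]
      refine mul_le_mul_of_nonneg_left ?_ (hw m).le
      linarith [norm_sub_le (φ m x) (φ m y), hbd m x, hbd m y])
  rw [← (hsum x).of_norm.tsum_sub (hsum y).of_norm]
  exact (norm_tsum_le_tsum_norm S).trans hS
end
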